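/- For every random variable Z ∈ L^1 there exists a random variable W, bounded from below, such that VaR_p(W) = ES_p(Z) for every p ∈ [0,1]; that is, every Expected Shortfall profile can be reproduced as a Value at Risk profile, and hence every benchmark-adjusted Expected Shortfall is also a quantile-adjusted Expected Shortfall. -/

import Mathlib

open MeasureTheory Set Filter

variable {Ω : Type*} [MeasurableSpace Ω]

/-- An atomless probability space: every set of positive measure has a subset of
strictly smaller positive measure. -/
def Atomless (μ : Measure Ω) : Prop :=
  ∀ A : Set Ω, MeasurableSet A → 0 < μ A →
    ∃ B : Set Ω, MeasurableSet B ∧ B ⊆ A ∧ 0 < μ B ∧ μ B < μ A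

/-- Value at Risk at level `p`: the left `p`-quantile for `p ∈ (0,1]`, the essential
infimum for `p = 0`.  Values are extended reals. -/
noncomputable def VaR (μ : Measure Ω) (X : Ω → ℝ) (p : ℝ) : EReal :=
  if p = 0 then essInf (fun ω => (X ω : EReal)) μ
  else sInf ((fun x : ℝ => (x : EReal)) '' {x : ℝ | ENNReal.ofReal p ≤ μ {ω | X ω ≤ x}})

/-- Real-valued version of the left `p`-quantile, used as the integrand of ES. -/
noncomputable def VaRr (μ : Measure Ω) (X : Ω → ℝ) (p : ℝ) : ℝ :=
  sInf {x : ℝ | ENNReal.ofReal p ≤ μ {ω | X ω ≤ x}}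

/-- Expected Shortfall at level `p`: `(1/(1-p)) ∫_p^1 VaR_q(X) dq` for `p ∈ [0,1)`,
the essential supremum for `p = 1`. -/
noncomputable def ES (μ : Measure Ω) (X : Ω → ℝ) (p : ℝ) : EReal :=
  if p = 1 then essSup (fun ω => (X ω : EReal)) μ
  else (((1 - p)⁻¹ * ∫ q in Set.Ioo p 1, VaRr μ X q : ℝ) : EReal)

/-- The `g`-adjusted Expected Shortfall, `sup_{p ∈ [0,1]} (ES_p(X) - g(p))`.
Note that in `EReal` one has `⊤ - ⊤ = ⊥`, matching the convention `∞ - ∞ = -∞`. -/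
noncomputable def adjES (μ : Measure Ω) (g : ℝ → EReal) (X : Ω → ℝ) : EReal :=
  ⨆ p ∈ Set.Icc (0:ℝ) 1, (ES μ X p - g p)

/-- The class `𝒢` of risk profiles: increasing functions `[0,1] → (-∞,∞]` that are
not identically `∞`. -/
def IsRiskProfile (g : ℝ → EReal) : Prop :=
  MonotoneOn g (Set.Icc (0:ℝ) 1) ∧ (∀ p ∈ Set.Icc (0:ℝ) 1, g p ≠ ⊥) ∧
    ∃ p ∈ Set.Icc (0:ℝ) 1, g p ≠ ⊤

/-- Second-order stochastic dominance: `SSD μ X Y` means `X ≥_SSD Y`, i.e. every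
risk-averse agent prefers `X` to `Y` (positive values are losses). -/
def SSD (μ : Measure Ω) (X Y : Ω → ℝ) : Prop :=
  ∀ u : ℝ → ℝ, Monotone u → ConcaveOn ℝ Set.univ u →
    ∫ ω, u (-(Y ω)) ∂μ ≤ ∫ ω, u (-(X ω)) ∂μ

/-- The inf-convolution of the functionals `ρ_1, …, ρ_n`. -/
noncomputable def infConv (μ : Measure Ω) {n : ℕ} (ρ : Fin n → ((Ω → ℝ) → EReal))
    (X : Ω → ℝ) : EReal :=
  ⨅ (Y : Fin n → Ω → ℝ) (_ : (∀ i, Integrable (Y i) μ) ∧ ∀ ω, (∑ i, Y i ω) = X ω),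
    ∑ i, ρ i (Y i)

/-- The class `𝒢_VaR`: risk profiles finite on `[0,1)`, left-continuous on `[0,1]`
and right-continuous at `0`. -/
def GVaRProfile (g : ℝ → EReal) : Prop :=
  IsRiskProfile g ∧ (∀ p ∈ Set.Ico (0:ℝ) 1, g p ≠ ⊤) ∧
    (∀ p ∈ Set.Ioc (0:ℝ) 1, Filter.Tendsto g (nhdsWithin p (Set.Ico 0 p)) (nhds (g p))) ∧
    Filter.Tendsto g (nhdsWithin 0 (Set.Ioc 0 1)) (nhds (g 0))

/-- The class `𝒢_ES`: profiles in `𝒢_VaR` such that `h_g(p) = (1-p)g(p)` is concave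
on `(0,1)` and left-continuous at `1` (with `h_g(1) = 0` by the convention `0·∞ = 0`). -/
def GESProfile (g : ℝ → EReal) : Prop :=
  GVaRProfile g ∧ ConcaveOn ℝ (Set.Ioo (0:ℝ) 1) (fun p => (1 - p) * (g p).toReal) ∧
    Filter.Tendsto (fun p => (1 - p) * (g p).toReal) (nhdsWithin 1 (Set.Ico (0:ℝ) 1)) (nhds 0)

/-!
The profile `p ↦ ES_p(Z)` belongs to `𝒢_VaR`: it is the average over `(p, 1)` of the increasing
function `q ↦ VaR_q(Z)`, hence increasing and continuous on `[0, 1)`, and at `1` it converges to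
`ess sup Z`, being squeezed between `VaR_p(Z)` and `ess sup Z`. Every `g ∈ 𝒢_VaR` is in turn the VaR
profile of `g(U)` for `U` uniform on `[0, 1)`. Such a `U` exists on an atomless space because a
maximal chain of strictly nested measurable sets takes every value of the measure: a missed value
would leave a gap in the chain, bounded by two of its members, and a set strictly between them
would extend it.
-/

section MeasureChain

/-- Strict nesting of measurable sets, with a strict increase of measure. A chain for this relation
is a chain for inclusion on which `μ` is injective, so that the ambiguity by null sets never
arises. -/
def StrictlyNested (μ : Measure Ω) (A B : {A : Set Ω // MeasurableSet A}) : Prop :=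
  A.1 ⊆ B.1 ∧ μ A < μ B

namespace StrictlyNested

variable {μ : Measure Ω} {C : Set {A : Set Ω // MeasurableSet A}}

lemma subset_of_measure_le (hC : IsChain (StrictlyNested μ) C)
    {A B : {A : Set Ω // MeasurableSet A}} (hA : A ∈ C) (hB : B ∈ C) (hAB : μ A ≤ μ B) :
    A.1 ⊆ B.1 := by
  rcases eq_or_ne A B with rfl | hne
  · rfl
  · rcases hC hA hB hne with h | h
    · exact h.1
    · exact absurd h.2 hAB.not_gt

lemma subset_or_subset (hC : IsChain (StrictlyNested μ) C)
    {A B : {A : Set Ω // MeasurableSet A}} (hA : A ∈ C) (hB : B ∈ C) : A.1 ⊆ B.1 ∨ B.1 ⊆ A.1 :=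
  (le_total (μ A) (μ B)).imp (subset_of_measure_le hC hA hB) (subset_of_measure_le hC hB hA)

lemma measure_mem_image (hC : IsMaxChain (StrictlyNested μ) C) {E : Set Ω} (hE : MeasurableSet E)
    (hcomp : ∀ D ∈ C, D.1 ⊆ E ∨ E ⊆ D.1) : μ E ∈ (fun D ↦ μ D.1) '' C := by
  by_contra hnot
  have hne (D) (hD : D ∈ C) : μ D.1 ≠ μ E := fun h ↦ hnot ⟨D, hD, h⟩
  have hinsert : IsChain (StrictlyNested μ) (insert ⟨E, hE⟩ C) :=
    hC.1.insert fun D hD _ ↦ (hcomp D hD).symm.imp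
      (fun h ↦ ⟨h, (measure_mono h).lt_of_ne (hne D hD).symm⟩)
      (fun h ↦ ⟨h, (measure_mono h).lt_of_ne (hne D hD)⟩)
  have hEC : ⟨E, hE⟩ ∈ C := hC.2 hinsert (subset_insert _ _) ▸ mem_insert _ _
  exact hne _ hEC rfl

lemma sSup_mem_image (hC : IsMaxChain (StrictlyNested μ) C) {S : Set ENNReal}
    (hS : S ⊆ (fun D ↦ μ D.1) '' C) (hne : S.Nonempty) : sSup S ∈ (fun D ↦ μ D.1) '' C := by
  obtain ⟨u, hu, hlim, huS⟩ := exists_seq_tendsto_sSup hne (OrderTop.bddAbove S)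
  choose D hDC hDu using fun n ↦ hS (huS n)
  have hD : Monotone fun n ↦ (D n).1 := fun m n hmn ↦
    subset_of_measure_le hC.1 (hDC m) (hDC n) ((hDu m).trans_le ((hu hmn).trans_eq (hDu n).symm))
  have hμ : μ (⋃ n, (D n).1) = sSup S :=
    tendsto_nhds_unique (tendsto_measure_iUnion_atTop hD) (hlim.congr fun n ↦ (hDu n).symm)
  rw [← hμ]
  refine measure_mem_image hC (MeasurableSet.iUnion fun n ↦ (D n).2) fun E hE ↦ ?_
  by_cases h : ∃ n, E.1 ⊆ (D n).1
  · exact Or.inl <| h.elim fun n hn ↦ hn.trans (subset_iUnion (fun n ↦ (D n).1) n)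
  · exact Or.inr <| iUnion_subset fun n ↦
      (subset_or_subset hC.1 hE (hDC n)).resolve_left fun hn ↦ h ⟨n, hn⟩

lemma sInf_mem_image [IsFiniteMeasure μ] (hC : IsMaxChain (StrictlyNested μ) C) {S : Set ENNReal}
    (hS : S ⊆ (fun D ↦ μ D.1) '' C) (hne : S.Nonempty) : sInf S ∈ (fun D ↦ μ D.1) '' C := by
  obtain ⟨u, hu, hlim, huS⟩ := exists_seq_tendsto_sInf hne (OrderBot.bddBelow S)
  choose D hDC hDu using fun n ↦ hS (huS n)
  have hD : Antitone fun n ↦ (D n).1 := fun m n hmn ↦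
    subset_of_measure_le hC.1 (hDC n) (hDC m) ((hDu n).trans_le ((hu hmn).trans_eq (hDu m).symm))
  have hμ : μ (⋂ n, (D n).1) = sInf S :=
    tendsto_nhds_unique (tendsto_measure_iInter_atTop (fun n ↦ (D n).2.nullMeasurableSet) hD
      ⟨0, measure_ne_top _ _⟩) (hlim.congr fun n ↦ (hDu n).symm)
  rw [← hμ]
  refine measure_mem_image hC (MeasurableSet.iInter fun n ↦ (D n).2) fun E hE ↦ ?_
  by_cases h : ∃ n, (D n).1 ⊆ E.1
  · exact Or.inr <| h.elim fun n hn ↦ (iInter_subset _ n).trans hn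
  · exact Or.inl <| subset_iInter fun n ↦
      (subset_or_subset hC.1 hE (hDC n)).resolve_right fun hn ↦ h ⟨n, hn⟩

end StrictlyNested

namespace Atomless

variable {μ : Measure Ω} [IsFiniteMeasure μ]

lemma exists_measure_between (hμ : Atomless μ) {A B : Set Ω} (hA : MeasurableSet A)
    (hB : MeasurableSet B) (hAB : A ⊆ B) (hlt : μ A < μ B) :
    ∃ E, MeasurableSet E ∧ A ⊆ E ∧ E ⊆ B ∧ μ A < μ E ∧ μ E < μ B := by
  have hadd : μ B = μ A + μ (B \ A) := by
    rw [← measure_union disjoint_sdiff_right (hB.diff hA), union_sdiff_cancel hAB]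
  have hpos : 0 < μ (B \ A) := pos_iff_ne_zero.2 fun h ↦ hlt.ne (by rw [hadd, h, add_zero])
  obtain ⟨F, hF, hFsub, hFpos, hFlt⟩ := hμ _ (hB.diff hA) hpos
  have hunion : μ (A ∪ F) = μ A + μ F :=
    measure_union (disjoint_sdiff_right.mono_right hFsub) hF
  refine ⟨A ∪ F, hA.union hF, subset_union_left, union_subset hAB (hFsub.trans sdiff_subset),
    ?_, ?_⟩
  · rw [hunion]
    exact ENNReal.lt_add_right (measure_ne_top _ _) hFpos.ne'
  · rw [hunion, hadd]
    exact ENNReal.add_lt_add_left (measure_ne_top _ _) hFlt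

lemma exists_mem_maxChain_measure_eq (hμ : Atomless μ) {C : Set {A : Set Ω // MeasurableSet A}}
    (hC : IsMaxChain (StrictlyNested μ) C) {t : ENNReal} (ht : t ≤ μ univ) :
    ∃ D ∈ C, μ D.1 = t := by
  have hempty : 0 ∈ (fun D ↦ μ D.1) '' C := measure_empty (μ := μ) ▸
    StrictlyNested.measure_mem_image hC .empty fun D _ ↦ Or.inr (empty_subset D.1)
  have huniv : μ univ ∈ (fun D ↦ μ D.1) '' C :=
    StrictlyNested.measure_mem_image hC .univ fun D _ ↦ Or.inl (subset_univ D.1)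
  obtain ⟨A, hAC, hA⟩ := StrictlyNested.sSup_mem_image hC
    (S := (fun D ↦ μ D.1) '' C ∩ Iic t) inter_subset_left ⟨0, hempty, mem_Iic.2 zero_le⟩
  obtain ⟨B, hBC, hB⟩ := StrictlyNested.sInf_mem_image hC
    (S := (fun D ↦ μ D.1) '' C ∩ Ici t) inter_subset_left ⟨μ univ, huniv, ht⟩
  have le_A (D) (hD : D ∈ C) (h : μ D.1 ≤ t) : μ D.1 ≤ μ A.1 :=
    (le_sSup (mem_inter (mem_image_of_mem _ hD) h)).trans_eq hA.symm
  have B_le (D) (hD : D ∈ C) (h : t ≤ μ D.1) : μ B.1 ≤ μ D.1 :=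
    hB.trans_le (sInf_le (mem_inter (mem_image_of_mem _ hD) h))
  by_contra! hno
  have hAt : μ A.1 < t := lt_of_le_of_ne (hA.trans_le (sSup_le fun _ h ↦ h.2)) (hno A hAC)
  have htB : t < μ B.1 :=
    lt_of_le_of_ne ((le_sInf fun _ h ↦ h.2).trans_eq hB.symm) (hno B hBC).symm
  obtain ⟨E, hE, hAE, hEB, hAltE, hEltB⟩ := hμ.exists_measure_between A.2 B.2
    (StrictlyNested.subset_of_measure_le hC.1 hAC hBC (hAt.trans htB).le) (hAt.trans htB)
  obtain ⟨D, hD, hDE : μ D.1 = μ E⟩ := StrictlyNested.measure_mem_image hC hE fun D hD ↦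
    (le_total (μ D.1) t).imp
      (fun h ↦ (StrictlyNested.subset_of_measure_le hC.1 hD hAC (le_A D hD h)).trans hAE)
      (fun h ↦ hEB.trans (StrictlyNested.subset_of_measure_le hC.1 hBC hD (B_le D hD h)))
  rcases le_total (μ D.1) t with h | h
  · exact (hDE ▸ le_A D hD h).not_gt hAltE
  · exact (hDE ▸ B_le D hD h).not_gt hEltB

lemma exists_monotone_measure_eq (hμ : Atomless μ) :
    ∃ A : ENNReal → Set Ω, Monotone A ∧ (∀ t, MeasurableSet (A t)) ∧
      ∀ t ≤ μ univ, μ (A t) = t := by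
  have hC : IsMaxChain (StrictlyNested μ) (maxChain (StrictlyNested μ)) := maxChain_spec
  choose D hDC hD using fun t : ENNReal ↦
    hμ.exists_mem_maxChain_measure_eq hC (min_le_right t (μ univ))
  refine ⟨fun t ↦ (D t).1, fun s t hst ↦ ?_, fun t ↦ (D t).2,
    fun t ht ↦ (hD t).trans (min_eq_left ht)⟩
  refine StrictlyNested.subset_of_measure_le hC.1 (hDC s) (hDC t) ?_
  rw [hD, hD]
  exact min_le_min_right _ hst

lemma exists_measure_lt_eq (hμ : Atomless μ) :
    ∃ V : Ω → ENNReal, Measurable V ∧ ∀ t ≤ μ univ, μ {ω | V ω < t} = t := by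
  obtain ⟨A, hA, hAm, hAμ⟩ := hμ.exists_monotone_measure_eq
  obtain ⟨s, hs, hsd⟩ := TopologicalSpace.exists_countable_dense ENNReal
  let V : Ω → ENNReal := fun ω ↦ sInf {t | ω ∈ A t}
  have hVA (t) : {ω | V ω < t} ⊆ A t := fun ω hω ↦ by
    obtain ⟨r, hr, hrt⟩ := sInf_lt_iff.1 (mem_ofPred.1 hω)
    exact hA hrt.le hr
  have hAV {r t} (hrt : r < t) : A r ⊆ {ω | V ω < t} := fun ω hω ↦
    (sInf_le hω : V ω ≤ r).trans_lt hrt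
  have hVeq (t) : {ω | V ω < t} = ⋃ r ∈ s ∩ Iio t, A r := by
    refine Subset.antisymm (fun ω hω ↦ ?_) (iUnion₂_subset fun r hr ↦ hAV hr.2)
    obtain ⟨r, hrs, hVr, hrt⟩ := hsd.exists_between hω
    exact mem_biUnion ⟨hrs, hrt⟩ (hVA r hVr)
  refine ⟨V, measurable_of_Iio fun t ↦ ?_, fun t ht ↦ le_antisymm ?_ ?_⟩
  · change MeasurableSet {ω | V ω < t}
    rw [hVeq t]
    exact .biUnion (hs.mono inter_subset_left) fun r _ ↦ hAm r
  · exact (measure_mono (hVA t)).trans_eq (hAμ t ht)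
  · refine le_of_forall_lt_imp_le_of_dense fun r hr ↦ ?_
    exact (hAμ r (hr.le.trans ht)).symm.trans_le (measure_mono (hAV hr))

end Atomless

end MeasureChain

lemma Atomless.exists_uniform {μ : Measure Ω} [IsProbabilityMeasure μ] (hμ : Atomless μ) :
    ∃ U : Ω → ℝ, Measurable U ∧ (∀ ω, U ω ∈ Ico 0 1) ∧
      ∀ t ∈ Icc (0 : ℝ) 1, μ {ω | U ω < t} = ENNReal.ofReal t := by
  obtain ⟨V, hV, hVt⟩ := hμ.exists_measure_lt_eq
  simp only [measure_univ] at hVt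
  have hV1 : ∀ᵐ ω ∂μ, V ω < 1 :=
    (mem_ae_iff_prob_eq_one (measurableSet_lt hV measurable_const)).2 (hVt 1 le_rfl)
  obtain ⟨U, hU, hrange, hUV⟩ := hV.ennreal_toReal.aemeasurable.exists_ae_eq_range_subset
    (t := Ico (0 : ℝ) 1)
    (hV1.mono fun ω hω ↦ ⟨ENNReal.toReal_nonneg, ENNReal.toReal_lt_of_lt_ofReal (by simpa)⟩)
    ⟨0, by simp⟩
  refine ⟨U, hU, fun ω ↦ hrange (mem_range_self ω), fun t ht ↦ ?_⟩
  rw [← hVt _ (ENNReal.ofReal_le_one.2 ht.2)]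
  refine measure_congr (eventuallyEq_set.2 ?_)
  filter_upwards [hUV, hV1] with ω hω hω1
  rw [← hω, ENNReal.lt_ofReal_iff_toReal_lt hω1.ne_top]

section ValueAtRisk

lemma VaR_eq_of_forall_le_iff {μ : Measure Ω} {X : Ω → ℝ} {p : ℝ} (hp : p ≠ 0) {y : EReal}
    (h : ∀ x : ℝ, ENNReal.ofReal p ≤ μ {ω | X ω ≤ x} ↔ y ≤ x) : VaR μ X p = y := by
  simp only [VaR, if_neg hp, h]
  refine le_antisymm (EReal.le_of_forall_lt_iff_le.1 fun z hz ↦ sInf_le ⟨z, hz.le, rfl⟩) ?_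
  exact le_sInf <| forall_mem_image.2 fun x hx ↦ hx

namespace GVaRProfile

variable {g : ℝ → EReal}

lemma coe_toReal (hg : GVaRProfile g) {p : ℝ} (hp : p ∈ Ico (0 : ℝ) 1) :
    ((g p).toReal : EReal) = g p :=
  EReal.coe_toReal (hg.2.1 p hp) (hg.1.2.1 p (Ico_subset_Icc_self hp))

lemma monotoneOn_toReal (hg : GVaRProfile g) : MonotoneOn (fun p ↦ (g p).toReal) (Ico 0 1) := by
  intro p hp q hq hpq
  rw [← EReal.coe_le_coe_iff, hg.coe_toReal hp, hg.coe_toReal hq]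
  exact hg.1.1 (Ico_subset_Icc_self hp) (Ico_subset_Icc_self hq) hpq

variable {μ : Measure Ω} {U : Ω → ℝ}

lemma ofReal_le_measure_le_iff (hg : GVaRProfile g) (hU : ∀ ω, U ω ∈ Ico 0 1)
    (hμU : ∀ t ∈ Icc (0 : ℝ) 1, μ {ω | U ω < t} = ENNReal.ofReal t)
    {p : ℝ} (hp : p ∈ Ioc (0 : ℝ) 1) (x : ℝ) :
    ENNReal.ofReal p ≤ μ {ω | (g (U ω)).toReal ≤ x} ↔ g p ≤ x := by
  have hUI (ω) : U ω ∈ Icc (0 : ℝ) 1 := Ico_subset_Icc_self (hU ω)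
  have hpI : p ∈ Icc (0 : ℝ) 1 := Ioc_subset_Icc_self hp
  constructor
  · intro hle
    have : (nhdsWithin p (Ico 0 p)).NeBot := by
      rw [nhdsWithin_Ico_eq_nhdsLT hp.1]; infer_instance
    refine le_of_tendsto (hg.2.2.1 p hp) (eventually_mem_nhdsWithin.mono fun q hq ↦ ?_)
    have hqI : q ∈ Icc (0 : ℝ) 1 := ⟨hq.1, hq.2.le.trans hp.2⟩
    by_contra! hx
    have hsub : {ω | (g (U ω)).toReal ≤ x} ⊆ {ω | U ω < q} := fun ω hω ↦ by
      rw [mem_ofPred_eq, ← EReal.coe_le_coe_iff, hg.coe_toReal (hU ω)] at hω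
      by_contra! hqU
      exact (hω.trans_lt hx).not_ge (hg.1.1 hqI (hUI ω) (not_lt.1 hqU))
    have hpq := hle.trans ((measure_mono hsub).trans_eq (hμU q hqI))
    exact ((ENNReal.ofReal_le_ofReal_iff hq.1).1 hpq).not_gt hq.2
  · intro hx
    rw [← hμU p hpI]
    refine measure_mono fun ω hω ↦ ?_
    rw [mem_ofPred_eq, ← EReal.coe_le_coe_iff, hg.coe_toReal (hU ω)]
    exact (hg.1.1 (hUI ω) hpI (le_of_lt hω)).trans hx

lemma essInf_comp (hg : GVaRProfile g) (hU : ∀ ω, U ω ∈ Ico 0 1)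
    (hμU : ∀ t ∈ Icc (0 : ℝ) 1, μ {ω | U ω < t} = ENNReal.ofReal t) :
    essInf (fun ω ↦ g (U ω)) μ = g 0 := by
  have hUI (ω) : U ω ∈ Icc (0 : ℝ) 1 := Ico_subset_Icc_self (hU ω)
  have h0 : (0 : ℝ) ∈ Icc (0 : ℝ) 1 := ⟨le_rfl, zero_le_one⟩
  refine le_antisymm ?_ (le_essInf_of_ae_le _ (.of_forall fun ω ↦ hg.1.1 h0 (hUI ω) (hU ω).1))
  have : (nhdsWithin (0 : ℝ) (Ioc 0 1)).NeBot := by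
    rw [nhdsWithin_Ioc_eq_nhdsGT one_pos]; infer_instance
  refine ge_of_tendsto hg.2.2.2 (eventually_mem_nhdsWithin.mono fun p hp ↦ ?_)
  by_contra! hlt
  have hnull : μ {ω | U ω < p} = 0 := by
    refine measure_mono_null (fun ω hω ↦ ?_) (ae_iff.1 (ae_lt_of_lt_essInf hlt))
    exact (hg.1.1 (hUI ω) (Ioc_subset_Icc_self hp) (le_of_lt hω)).not_gt
  rw [hμU p (Ioc_subset_Icc_self hp), ENNReal.ofReal_eq_zero] at hnull
  exact hnull.not_gt hp.1

lemma exists_VaR_eq [IsProbabilityMeasure μ] (hg : GVaRProfile g) (hμ : Atomless μ) :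
    ∃ W : Ω → ℝ, Measurable W ∧ (∃ c, ∀ ω, c ≤ W ω) ∧ ∀ p ∈ Icc (0 : ℝ) 1, VaR μ W p = g p := by
  obtain ⟨U, hUm, hU, hμU⟩ := hμ.exists_uniform
  have hgm : Measurable fun u : Ico (0 : ℝ) 1 ↦ (g u).toReal :=
    Monotone.measurable fun u v huv ↦ hg.monotoneOn_toReal u.2 v.2 huv
  refine ⟨fun ω ↦ (g (U ω)).toReal, hgm.comp (hUm.subtype_mk (h := hU)),
    ⟨(g 0).toReal, fun ω ↦ hg.monotoneOn_toReal ⟨le_rfl, one_pos⟩ (hU ω) (hU ω).1⟩, fun p hp ↦ ?_⟩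
  rcases hp.1.eq_or_lt with rfl | hp0
  · simp only [VaR, if_true, hg.coe_toReal (hU _)]
    exact hg.essInf_comp hU hμU
  · exact VaR_eq_of_forall_le_iff hp0.ne' (hg.ofReal_le_measure_le_iff hU hμU ⟨hp0, hp.2⟩)

end GVaRProfile

section Quantile

variable {μ : Measure Ω} [IsProbabilityMeasure μ] {X : Ω → ℝ}

lemma VaRr_le_iff (hX : AEMeasurable X μ) {p : ℝ} (hp : p ∈ Ioo (0 : ℝ) 1) (x : ℝ) :
    VaRr μ X p ≤ x ↔ ENNReal.ofReal p ≤ μ {ω | X ω ≤ x} := by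
  have : IsProbabilityMeasure (μ.map X) := Measure.isProbabilityMeasure_map hX
  set F := ProbabilityTheory.cdf (μ.map X)
  have hF (y : ℝ) : ENNReal.ofReal p ≤ μ {ω | X ω ≤ y} ↔ p ≤ F y := by
    have : μ {ω | X ω ≤ y} = ENNReal.ofReal (F y) := by
      rw [ProbabilityTheory.ofReal_cdf, Measure.map_apply_of_aemeasurable hX measurableSet_Iic]
      rfl
    rw [this, ENNReal.ofReal_le_ofReal_iff (ProbabilityTheory.cdf_nonneg _ _)]
  have hne : {y | p ≤ F y}.Nonempty :=
    ((ProbabilityTheory.tendsto_cdf_atTop _).eventually_const_le hp.2).exists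
  have hbdd : BddBelow {y | p ≤ F y} := by
    obtain ⟨a, ha⟩ := ((ProbabilityTheory.tendsto_cdf_atBot (μ.map X)).eventually_lt_const
      hp.1).exists
    exact ⟨a, fun y hy ↦ le_of_lt <| F.mono.reflect_lt (ha.trans_le hy)⟩
  have hmem : p ≤ F (sInf {y | p ≤ F y}) :=
    ge_of_tendsto_of_frequently (F.right_continuous _)
      ((isGLB_csInf hne hbdd).frequently_mem hne)
  simp only [VaRr, hF]
  exact ⟨fun h ↦ hmem.trans (F.mono h), fun h ↦ csInf_le hbdd h⟩

lemma monotoneOn_VaRr (hX : AEMeasurable X μ) : MonotoneOn (VaRr μ X) (Ioo 0 1) := by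
  intro p hp q hq hpq
  rw [VaRr_le_iff hX hp]
  exact (ENNReal.ofReal_le_ofReal hpq).trans ((VaRr_le_iff hX hq _).1 le_rfl)

lemma aemeasurable_VaRr (hX : AEMeasurable X μ) :
    AEMeasurable (VaRr μ X) (volume.restrict (Ioo 0 1)) :=
  aemeasurable_restrict_of_monotoneOn measurableSet_Ioo (monotoneOn_VaRr hX)

lemma map_VaRr (hX : AEMeasurable X μ) :
    (volume.restrict (Ioo 0 1)).map (VaRr μ X) = μ.map X := by
  refine Measure.ext_of_Iic _ _ fun x ↦ ?_
  have hle : μ.real {ω | X ω ≤ x} ≤ 1 := measureReal_le_one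
  have hset : VaRr μ X ⁻¹' Iic x ∩ Ioo 0 1 = Iic (μ.real {ω | X ω ≤ x}) ∩ Ioo 0 1 := by
    ext p
    refine and_congr_left fun hp ↦ (VaRr_le_iff hX hp x).trans ?_
    exact ENNReal.ofReal_le_iff_le_toReal (measure_ne_top _ _)
  calc (volume.restrict (Ioo 0 1)).map (VaRr μ X) (Iic x)
      = volume (VaRr μ X ⁻¹' Iic x ∩ Ioo 0 1) := by
        rw [Measure.map_apply_of_aemeasurable (aemeasurable_VaRr hX) measurableSet_Iic,
          Measure.restrict_apply' measurableSet_Ioo]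
    _ = volume (Ioc 0 1 ∩ Iic (μ.real {ω | X ω ≤ x})) := by
        rw [hset, ← Measure.restrict_apply measurableSet_Iic, restrict_Ioo_eq_restrict_Ioc,
          Measure.restrict_apply measurableSet_Iic, inter_comm]
    _ = μ {ω | X ω ≤ x} := by
        rw [Ioc_inter_Iic, min_eq_right hle, Real.volume_Ioc, sub_zero, ofReal_measureReal]
    _ = μ.map X (Iic x) := (Measure.map_apply_of_aemeasurable hX measurableSet_Iic).symm

lemma integrableOn_VaRr (hX : Integrable X μ) : IntegrableOn (VaRr μ X) (Ioo 0 1) := by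
  have hid : Integrable id (μ.map X) :=
    (integrable_map_measure aestronglyMeasurable_id hX.aemeasurable).2 hX
  rw [← map_VaRr hX.aemeasurable] at hid
  exact (integrable_map_measure aestronglyMeasurable_id (aemeasurable_VaRr hX.aemeasurable)).1 hid

end Quantile

end ValueAtRisk

section RightAverage

variable {Q : ℝ → ℝ} {a b p : ℝ}

lemma setAverage_Ioo_le (hp : p < b) (hi : IntegrableOn Q (Ioo p b)) {x : ℝ}
    (hx : ∀ q ∈ Ioo p b, Q q ≤ x) : ⨍ q in Ioo p b, Q q ≤ x :=
  (convex_Iic x).set_average_mem isClosed_Iic (by simpa) (by simp)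
    (ae_restrict_of_forall_mem measurableSet_Ioo hx) hi

lemma le_setAverage_Ioo (hp : p < b) (hi : IntegrableOn Q (Ioo p b)) {x : ℝ}
    (hx : ∀ q ∈ Ioo p b, x ≤ Q q) : x ≤ ⨍ q in Ioo p b, Q q :=
  (convex_Ici x).set_average_mem isClosed_Ici (by simpa) (by simp)
    (ae_restrict_of_forall_mem measurableSet_Ioo hx) hi

lemma le_setAverage_Ioo_of_monotoneOn (hQ : MonotoneOn Q (Ioo a b)) (hi : IntegrableOn Q (Ioo a b))
    (hp : p ∈ Ioo a b) : Q p ≤ ⨍ q in Ioo p b, Q q :=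
  le_setAverage_Ioo hp.2 (hi.mono_set (Ioo_subset_Ioo_left hp.1.le)) fun _ hq ↦
    hQ hp ⟨hp.1.trans hq.1, hq.2⟩ hq.1.le

lemma monotoneOn_setAverage_Ioo (hQ : MonotoneOn Q (Ioo a b)) (hi : IntegrableOn Q (Ioo a b)) :
    MonotoneOn (fun p ↦ ⨍ q in Ioo p b, Q q) (Ico a b) := by
  intro p hp p' hp' hpp'
  rcases hpp'.eq_or_lt with rfl | hlt
  · rfl
  have hp'I : p' ∈ Ioo a b := ⟨hp.1.trans_lt hlt, hp'.2⟩
  have hiL : IntegrableOn Q (Ioo p p') := hi.mono_set (Ioo_subset_Ioo hp.1 hp'.2.le)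
  have hiR : IntegrableOn Q (Ioo p' b) := hi.mono_set (Ioo_subset_Ioo_left hp'.1)
  have hL : ⨍ q in Ioo p p', Q q ≤ Q p' := setAverage_Ioo_le hlt hiL fun q hq ↦
    hQ ⟨hp.1.trans_lt hq.1, hq.2.trans hp'.2⟩ hp'I hq.2.le
  have hLR : ⨍ q in Ioo p p', Q q ≤ ⨍ q in Ioo p' b, Q q :=
    hL.trans (le_setAverage_Ioo_of_monotoneOn hQ hi hp'I)
  have hunion : Ioo p b =ᵐ[volume] (Ioo p p' ∪ Ioo p' b : Set ℝ) := by
    rw [← Ioc_union_Ioo_eq_Ioo hlt.le hp'.2]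
    exact Ioo_ae_eq_Ioc.symm.union (ae_eq_refl _)
  have hmem : ⨍ q in Ioo p b, Q q ∈ segment ℝ (⨍ q in Ioo p p', Q q) (⨍ q in Ioo p' b, Q q) := by
    rw [setAverage_congr hunion]
    refine average_union_mem_segment (Disjoint.aedisjoint ?_) nullMeasurableSet_Ioo (by simp)
      (by simp) hiL hiR
    exact disjoint_left.2 fun q hq hq' ↦ (hq.2.trans hq'.1).false
  rw [segment_eq_Icc hLR] at hmem
  exact hmem.2

lemma continuousOn_setAverage_Ioo (hi : IntegrableOn Q (Ioo a b)) :
    ContinuousOn (fun p ↦ ⨍ q in Ioo p b, Q q) (Ico a b) := by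
  rcases le_or_gt b a with hba | hab
  · simp [Ico_eq_empty hba.not_gt]
  have hint : ContinuousOn (fun p ↦ ∫ q in p..b, Q q) (Icc a b) := by
    rw [← uIcc_of_le hab.le]
    apply intervalIntegral.continuousOn_primitive_interval_left
    rwa [uIcc_of_le hab.le, integrableOn_Icc_iff_integrableOn_Ioo]
  have hinv : ContinuousOn (fun p ↦ (b - p)⁻¹) (Ico a b) :=
    ContinuousOn.inv₀ (by fun_prop) fun p hp ↦ (sub_pos.2 hp.2).ne'
  refine (hinv.mul (hint.mono Ico_subset_Icc_self)).congr fun p hp ↦ ?_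
  simp only [Pi.mul_apply, setAverage_eq, Real.volume_real_Ioo_of_le hp.2.le, smul_eq_mul,
    intervalIntegral.integral_of_le hp.2.le, integral_Ioc_eq_integral_Ioo]

end RightAverage

section ExpectedShortfall

variable {μ : Measure Ω} {X : Ω → ℝ}

lemma ES_of_lt_one {p : ℝ} (hp : p < 1) :
    ES μ X p = ((⨍ q in Ioo p 1, VaRr μ X q : ℝ) : EReal) := by
  rw [ES, if_neg hp.ne, setAverage_eq, Real.volume_real_Ioo_of_le hp.le, smul_eq_mul]

lemma ES_one : ES μ X 1 = essSup (fun ω ↦ (X ω : EReal)) μ := if_pos rfl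

variable [IsProbabilityMeasure μ]

lemma ES_one_le_iff (hX : AEMeasurable X μ) (x : ℝ) :
    ES μ X 1 ≤ x ↔ μ {ω | X ω ≤ x} = 1 := by
  rw [ES_one, ← mem_ae_iff_prob_eq_one₀ (nullMeasurableSet_le hX aemeasurable_const)]
  refine ⟨fun h ↦ ?_, fun h ↦ essSup_le_of_ae_le _ (mem_of_superset h fun ω hω ↦ ?_)⟩
  · filter_upwards [ae_le_essSup (f := fun ω ↦ (X ω : EReal)) (μ := μ)] with ω hω
    exact EReal.coe_le_coe_iff.1 (hω.trans h)
  · exact EReal.coe_le_coe_iff.2 hω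

lemma ES_le_ES_one (hX : Integrable X μ) {p : ℝ} (hp : p ∈ Ico (0 : ℝ) 1) :
    ES μ X p ≤ ES μ X 1 := by
  refine EReal.le_of_forall_lt_iff_le.1 fun x hx ↦ ?_
  rw [ES_of_lt_one hp.2, EReal.coe_le_coe_iff]
  refine setAverage_Ioo_le hp.2
    ((integrableOn_VaRr hX).mono_set (Ioo_subset_Ioo_left hp.1)) fun q hq ↦ ?_
  rw [VaRr_le_iff hX.aemeasurable ⟨hp.1.trans_lt hq.1, hq.2⟩,
    (ES_one_le_iff hX.aemeasurable x).1 hx.le]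
  exact ENNReal.ofReal_le_one.2 hq.2.le

lemma monotoneOn_ES (hX : Integrable X μ) : MonotoneOn (ES μ X) (Icc 0 1) := by
  intro p hp q hq hpq
  rcases hq.2.eq_or_lt with rfl | hq1
  · rcases hpq.eq_or_lt with rfl | hp1
    · rfl
    · exact ES_le_ES_one hX ⟨hp.1, hp1⟩
  · rw [ES_of_lt_one (hpq.trans_lt hq1), ES_of_lt_one hq1, EReal.coe_le_coe_iff]
    exact monotoneOn_setAverage_Ioo (monotoneOn_VaRr hX.aemeasurable) (integrableOn_VaRr hX)
      ⟨hp.1, hpq.trans_lt hq1⟩ ⟨hq.1, hq1⟩ hpq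

lemma continuousOn_ES (hX : Integrable X μ) : ContinuousOn (ES μ X) (Ico 0 1) :=
  (continuous_coe_real_ereal.comp_continuousOn
    (continuousOn_setAverage_Ioo (integrableOn_VaRr hX))).congr fun _ hp ↦ ES_of_lt_one hp.2

lemma tendsto_ES_one (hX : Integrable X μ) :
    Tendsto (ES μ X) (nhdsWithin 1 (Ico 0 1)) (nhds (ES μ X 1)) := by
  refine tendsto_order.2 ⟨fun y hy ↦ ?_, fun y hy ↦
    eventually_mem_nhdsWithin.mono fun p hp ↦ (ES_le_ES_one hX hp).trans_lt hy⟩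
  obtain ⟨x, hyx, hx⟩ := EReal.lt_iff_exists_real_btwn.1 hy
  have hlt : μ.real {ω | X ω ≤ x} < 1 := measureReal_le_one.lt_of_ne fun h ↦
    hx.not_ge ((ES_one_le_iff hX.aemeasurable x).2 ((ENNReal.toReal_eq_one_iff _).1 h))
  filter_upwards [eventually_mem_nhdsWithin, mem_nhdsWithin_of_mem_nhds (Ioi_mem_nhds hlt)]
    with p hp hlt
  have hp0 : p ∈ Ioo (0 : ℝ) 1 := ⟨measureReal_nonneg.trans_lt hlt, hp.2⟩
  have hxp : x < VaRr μ X p := by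
    rw [← not_le, VaRr_le_iff hX.aemeasurable hp0, not_le]
    exact (ENNReal.lt_ofReal_iff_toReal_lt (measure_ne_top _ _)).2 hlt
  rw [ES_of_lt_one hp.2]
  refine hyx.trans (EReal.coe_lt_coe_iff.2 (hxp.trans_le ?_))
  exact le_setAverage_Ioo_of_monotoneOn (monotoneOn_VaRr hX.aemeasurable) (integrableOn_VaRr hX) hp0

lemma gVaRProfile_ES (hX : Integrable X μ) : GVaRProfile (ES μ X) := by
  have h0 : (0 : ℝ) ∈ Ico (0 : ℝ) 1 := ⟨le_rfl, one_pos⟩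
  have hbot : ES μ X 0 ≠ ⊥ := by
    rw [ES_of_lt_one one_pos]
    exact EReal.coe_ne_bot _
  have htop (p) (hp : p ∈ Ico (0 : ℝ) 1) : ES μ X p ≠ ⊤ := by
    rw [ES_of_lt_one hp.2]
    exact EReal.coe_ne_top _
  refine ⟨⟨monotoneOn_ES hX, fun p hp ↦ ?_, 0, Ico_subset_Icc_self h0, htop 0 h0⟩, htop,
    fun p hp ↦ ?_, ?_⟩
  · exact ne_bot_of_le_ne_bot hbot (monotoneOn_ES hX (Ico_subset_Icc_self h0) hp hp.1)
  · rcases hp.2.eq_or_lt with rfl | hp1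
    · exact tendsto_ES_one hX
    · exact (continuousOn_ES hX p ⟨hp.1.le, hp1⟩).mono (Ico_subset_Ico_right hp.2)
  · rw [nhdsWithin_Ioc_eq_nhdsGT one_pos, ← nhdsWithin_Ioo_eq_nhdsGT one_pos]
    exact (continuousOn_ES hX 0 h0).mono Ioo_subset_Ico_self

end ExpectedShortfall

theorem stmt15_general {Ω' : Type*} [MeasurableSpace Ω'] (μ : Measure Ω) [IsProbabilityMeasure μ]
    (hatomless : Atomless μ) (ν : Measure Ω') [IsProbabilityMeasure ν] (Z : Ω' → ℝ)
    (hZ : Integrable Z ν) :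
    ∃ W : Ω → ℝ, Measurable W ∧ (∃ c : ℝ, ∀ ω, c ≤ W ω) ∧
      ∀ p ∈ Icc (0 : ℝ) 1, VaR μ W p = ES ν Z p :=
  (gVaRProfile_ES hZ).exists_VaR_eq hatomless

/-- For every `Z ∈ L¹` there is a random variable `W` bounded from
below whose VaR profile reproduces the ES profile of `Z`: `VaR_p(W) = ES_p(Z)` for
every `p ∈ [0,1]`. -/
theorem stmt15 (μ : Measure Ω) [IsProbabilityMeasure μ] (hatomless : Atomless μ)
    (Z : Ω → ℝ) (hZ : Integrable Z μ) :
    ∃ W : Ω → ℝ, Measurable W ∧ (∃ c : ℝ, ∀ ω, c ≤ W ω) ∧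
      ∀ p ∈ Set.Icc (0:ℝ) 1, VaR μ W p = ES μ Z p :=
  stmt15_general μ hatomless μ Z hZ
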